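/- Let S be a skew lattice with D-classes A > B, let a ∈ A and b ∈ B. Then the map φ defined by φ(x) = x∧b∧x is a bijection from the coset B∨a∨B onto the coset A∧b∧A (in Lean: Set.BijOn of the map x ↦ x∧b∧x on the set B∨a∨B with image A∧b∧A). -/

import Mathlib

/-!
The relation `x ≼ y ↔ x∧y∧x = x` is a preorder whose equivalence classes are the `D`-classes, and
exchanging `∧` with `∨` reverses it; inside one `D`-class moreover `x∨y = y∧x`. These facts force
`∧` to be regular, `x∧y∧x∧z∧x = x∧y∧z∧x` (Leech), so that `y∧(x∧b∧x)∧y = y∧b∧y` whenever `y ≼ x`.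

If `c = x∧b∧x` and `y = c∨a∨c` with `x, a ∈ A`, then `y ∈ A` and, by absorption, `c = y∧c∧y`, which
regularity turns into `y∧b∧y`. Hence `y ↦ y∧b∧y` undoes `c ↦ c∨a∨c` on `A∧b∧A`, and by duality the
two maps are mutually inverse.
-/

/-- A band, i.e. an idempotent semigroup. The operation is an explicit argument because the two
operations of a skew lattice are bands on the same type. -/
structure IsBand {S : Type*} (op : S → S → S) : Prop where
  idem : ∀ x, op x x = x
  assoc : ∀ x y z, op (op x y) z = op x (op y z)

/-- The natural preorder of a band: `x` lies below `y` when `x * y * x = x`. -/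
def BandLE {S : Type*} (op : S → S → S) (x y : S) : Prop := op (op x y) x = x

/-- The class of `a` for Green's relation `D`, the equivalence in which mutually `BandLE`-comparable
elements are identified. -/
def dClass {S : Type*} (op : S → S → S) (a : S) : Set S := {x | AntisymmRel (BandLE op) x a}

/-- The map `x ↦ x * b * x`; its values on a `D`-class `A` form the coset of `A` through `b`. -/
def cosetMap {S : Type*} (op : S → S → S) (b x : S) : S := op (op x b) x

/-- The coset `A * b * A`, which consists of the elements `x * b * x` with both outer factors
equal. -/
def dCoset {S : Type*} (op : S → S → S) (A : Set S) (b : S) : Set S :=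
  {z | ∃ x ∈ A, z = cosetMap op b x}

namespace IsBand

variable {S : Type*} {op : S → S → S} {x y z : S}

local infixl:70 " ⬝ " => op
local infix:50 " ≼ " => BandLE op

theorem op_op_self (h : IsBand op) (x y : S) : x ⬝ (x ⬝ y) = x ⬝ y := by
  rw [← h.assoc, h.idem]

theorem op_self_op (h : IsBand op) (x y : S) : x ⬝ y ⬝ y = x ⬝ y := by
  rw [h.assoc, h.idem]

theorem le_refl (h : IsBand op) (x : S) : x ≼ x := by
  rw [BandLE, h.idem, h.idem]

theorem le_of_op_eq_left (h : IsBand op) (hxy : x ⬝ y = x) : x ≼ y := by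
  rw [BandLE, hxy, h.idem]

theorem le_of_op_eq_right (h : IsBand op) (hyx : y ⬝ x = x) : x ≼ y := by
  rw [BandLE, h.assoc, hyx, h.idem]

theorem op_le_left (h : IsBand op) (x y : S) : x ⬝ y ≼ x :=
  h.le_of_op_eq_right (h.op_op_self x y)

theorem op_le_right (h : IsBand op) (x y : S) : x ⬝ y ≼ y :=
  h.le_of_op_eq_left (h.op_self_op x y)

theorem le_trans (h : IsBand op) (hxy : x ≼ y) (hyz : y ≼ z) : x ≼ z := by
  have expand : x ⬝ y ⬝ (z ⬝ y ⬝ x) = x := by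
    calc x ⬝ y ⬝ (z ⬝ y ⬝ x) = x ⬝ (y ⬝ z ⬝ y) ⬝ x := by simp only [h.assoc]
      _ = x := by rw [hyz, hxy]
  have cancel_left : x ⬝ z ⬝ (y ⬝ x) = x := by
    calc x ⬝ z ⬝ (y ⬝ x) = x ⬝ (z ⬝ y ⬝ x) := by simp only [h.assoc]
      _ = x ⬝ y ⬝ (z ⬝ y ⬝ x) ⬝ (z ⬝ y ⬝ x) := by rw [expand]
      _ = x := by rw [h.op_self_op, expand]
  calc x ⬝ z ⬝ x = x ⬝ z ⬝ (x ⬝ z ⬝ (y ⬝ x)) := by rw [cancel_left]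
    _ = x := by rw [h.op_op_self, cancel_left]

theorem le_op (h : IsBand op) (hxy : x ≼ y) (hxz : x ≼ z) : x ≼ y ⬝ z := by
  calc x ⬝ (y ⬝ z) ⬝ x = (x ⬝ z ⬝ x) ⬝ y ⬝ z ⬝ (x ⬝ y ⬝ x) := by
        rw [hxy, hxz]; simp only [h.assoc]
    _ = x ⬝ ((z ⬝ x ⬝ y) ⬝ (z ⬝ x ⬝ y)) ⬝ x := by simp only [h.assoc]
    _ = (x ⬝ z ⬝ x) ⬝ y ⬝ x := by rw [h.idem]; simp only [h.assoc]
    _ = x := by rw [hxz, hxy]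

theorem cosetMap_le (h : IsBand op) (b x : S) : cosetMap op b x ≼ b :=
  h.le_trans (h.op_le_left _ _) (h.op_le_right _ _)

theorem le_cosetMap (h : IsBand op) {b : S} (hzx : z ≼ x) (hzb : z ≼ b) : z ≼ cosetMap op b x :=
  h.le_op (h.le_op hzx hzb) hzx

theorem dClass_eq (h : IsBand op) (hxy : x ∈ dClass op y) : dClass op x = dClass op y := by
  have : IsTrans S (BandLE op) := ⟨fun _ _ _ => h.le_trans⟩
  exact Set.ext fun _ => ⟨fun hz => AntisymmRel.trans hz hxy,
    fun hz => AntisymmRel.trans hz (AntisymmRel.symm hxy)⟩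

theorem mapsTo_cosetMap_dClass (h : IsBand op) (hyx : y ≼ x) :
    Set.MapsTo (cosetMap op y) (dClass op x) (dClass op y) := fun _ hz =>
  ⟨h.cosetMap_le _ _, h.le_cosetMap (h.le_trans hyx hz.2) (h.le_refl y)⟩

theorem dCoset_subset_dClass (h : IsBand op) (hyx : y ≼ x) :
    dCoset op (dClass op x) y ⊆ dClass op y := by
  rintro _ ⟨z, hz, rfl⟩
  exact h.mapsTo_cosetMap_dClass hyx hz

end IsBand

/-- The skew lattice axioms, unbundled so that the two operations can be exchanged and their
arguments reversed. -/
structure IsSkewLattice {S : Type*} (wedge vee : S → S → S) : Prop where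
  isBand_wedge : IsBand wedge
  isBand_vee : IsBand vee
  wedge_vee_self_left : ∀ x y, wedge x (vee x y) = x
  wedge_vee_self_right : ∀ x y, wedge (vee y x) x = x
  vee_wedge_self_left : ∀ x y, vee x (wedge x y) = x
  vee_wedge_self_right : ∀ x y, vee (wedge y x) x = x

namespace IsSkewLattice

variable {S : Type*} {wedge vee : S → S → S} {a b x y : S}

local infixl:70 " ⋏ " => wedge
local infixl:70 " ⋎ " => vee
local infix:50 " ≼ " => BandLE wedge

theorem dual (h : IsSkewLattice wedge vee) : IsSkewLattice vee wedge :=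
  ⟨h.isBand_vee, h.isBand_wedge, h.vee_wedge_self_left, h.vee_wedge_self_right,
    h.wedge_vee_self_left, h.wedge_vee_self_right⟩

theorem reverse (h : IsSkewLattice wedge vee) : IsSkewLattice (flip wedge) (flip vee) where
  isBand_wedge := ⟨h.isBand_wedge.idem, fun x y z => (h.isBand_wedge.assoc z y x).symm⟩
  isBand_vee := ⟨h.isBand_vee.idem, fun x y z => (h.isBand_vee.assoc z y x).symm⟩
  wedge_vee_self_left := h.wedge_vee_self_right
  wedge_vee_self_right := h.wedge_vee_self_left
  vee_wedge_self_left := h.vee_wedge_self_right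
  vee_wedge_self_right := h.vee_wedge_self_left

theorem vee_le_of_wedge_le (h : IsSkewLattice wedge vee) (hxy : x ≼ y) : BandLE vee y x := by
  have absorb : x ⋎ (y ⋏ x) = y ⋏ x := by
    calc x ⋎ (y ⋏ x) = (x ⋏ (y ⋏ x)) ⋎ (y ⋏ x) := by rw [← h.isBand_wedge.assoc, hxy]
      _ = y ⋏ x := h.vee_wedge_self_right _ _
  exact h.isBand_vee.le_trans (h.isBand_vee.le_of_op_eq_left (h.vee_wedge_self_left y x))
    (h.isBand_vee.le_of_op_eq_right absorb)

theorem dClass_vee (h : IsSkewLattice wedge vee) (a : S) : dClass vee a = dClass wedge a :=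
  Set.ext fun _ => ⟨fun hx => ⟨h.dual.vee_le_of_wedge_le hx.2, h.dual.vee_le_of_wedge_le hx.1⟩,
    fun hx => ⟨h.vee_le_of_wedge_le hx.2, h.vee_le_of_wedge_le hx.1⟩⟩

theorem vee_le_left (h : IsSkewLattice wedge vee) (hyx : y ≼ x) : x ⋎ y ≼ x :=
  h.dual.vee_le_of_wedge_le <|
    h.isBand_vee.le_op (h.isBand_vee.le_refl x) (h.vee_le_of_wedge_le hyx)

theorem vee_eq_wedge_of_antisymmRel (h : IsSkewLattice wedge vee)
    (hxy : AntisymmRel (BandLE wedge) x y) : x ⋎ y = y ⋏ x := by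
  have join_le_meet : x ⋎ y ≼ y ⋏ x := h.isBand_wedge.le_trans (h.vee_le_left hxy.2)
    (h.isBand_wedge.le_op hxy.1 (h.isBand_wedge.le_refl x))
  calc x ⋎ y = (x ⋎ y) ⋏ (y ⋏ x) ⋏ (x ⋎ y) := join_le_meet.symm
    _ = y ⋏ x ⋏ (x ⋎ y) := by rw [← h.isBand_wedge.assoc (x ⋎ y), h.wedge_vee_self_right]
    _ = y ⋏ x := by rw [h.isBand_wedge.assoc, h.wedge_vee_self_left]

theorem wedge_eq_wedge_of_le (h : IsSkewLattice wedge vee) (hyx : y ⋏ x = x) (hxy : x ⋏ y = y)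
    (hbx : b ≼ x) : y ⋏ b = x ⋏ b := by
  have le_join : x ≼ x ⋎ b := h.isBand_wedge.le_of_op_eq_left (h.wedge_vee_self_left x b)
  have join_equiv : AntisymmRel (BandLE wedge) y (x ⋎ b) :=
    ⟨h.isBand_wedge.le_trans (h.isBand_wedge.le_of_op_eq_right hxy) le_join,
      h.isBand_wedge.le_trans (h.vee_le_left hbx) (h.isBand_wedge.le_of_op_eq_right hyx)⟩
  have join_eq : y ⋎ b = (x ⋎ b) ⋏ y := by
    calc y ⋎ b = y ⋎ (y ⋏ x) ⋎ b := by rw [h.vee_wedge_self_left]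
      _ = y ⋎ (x ⋎ b) := by rw [hyx, h.isBand_vee.assoc]
      _ = (x ⋎ b) ⋏ y := h.vee_eq_wedge_of_antisymmRel join_equiv
  calc y ⋏ b = x ⋏ (x ⋎ b) ⋏ y ⋏ b := by rw [h.wedge_vee_self_left, hxy]
    _ = x ⋏ ((x ⋎ b) ⋏ y ⋏ b) := by simp only [h.isBand_wedge.assoc]
    _ = x ⋏ b := by rw [← join_eq, h.wedge_vee_self_right]

theorem regular_wedge_self (h : IsSkewLattice wedge vee) (x y z : S) :
    x ⋏ y ⋏ x ⋏ z ⋏ x ⋏ (x ⋏ y ⋏ z ⋏ x) = x ⋏ y ⋏ z ⋏ x := by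
  have hw := h.isBand_wedge
  have le_xy : z ⋏ (x ⋏ y) ⋏ (z ⋏ x) ≼ x ⋏ y :=
    hw.le_trans (hw.op_le_left _ _) (hw.op_le_right _ _)
  have le_x : z ⋏ (x ⋏ y) ⋏ (z ⋏ x) ≼ x := hw.le_trans le_xy (hw.op_le_left _ _)
  have exchange : x ⋏ y ⋏ (z ⋏ (x ⋏ y) ⋏ (z ⋏ x)) = x ⋏ y ⋏ x ⋏ (z ⋏ (x ⋏ y) ⋏ (z ⋏ x)) :=
    h.wedge_eq_wedge_of_le
      (by rw [← hw.assoc, hw.idem])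
      (by rw [hw.assoc, hw.op_op_self, hw.idem])
      (hw.le_op le_xy le_x)
  calc x ⋏ y ⋏ x ⋏ z ⋏ x ⋏ (x ⋏ y ⋏ z ⋏ x)
      = x ⋏ y ⋏ x ⋏ (z ⋏ (x ⋏ y) ⋏ (z ⋏ x)) := by simp only [hw.assoc, hw.op_op_self]
    _ = (x ⋏ y ⋏ z) ⋏ (x ⋏ y ⋏ z) ⋏ x := by rw [← exchange]; simp only [hw.assoc]
    _ = x ⋏ y ⋏ z ⋏ x := by rw [hw.idem]

theorem regular (h : IsSkewLattice wedge vee) (x y z : S) :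
    x ⋏ y ⋏ x ⋏ z ⋏ x = x ⋏ y ⋏ z ⋏ x := by
  have hw := h.isBand_wedge
  have left_absorb := h.regular_wedge_self x y z
  have right_absorb : x ⋏ y ⋏ z ⋏ x ⋏ (x ⋏ y ⋏ x ⋏ z ⋏ x) = x ⋏ y ⋏ z ⋏ x := by
    simpa only [flip, hw.assoc] using h.reverse.regular_wedge_self x z y
  have le_xy : x ⋏ y ⋏ x ⋏ z ⋏ x ≼ x ⋏ y :=
    hw.le_trans (hw.op_le_left _ _) (hw.le_trans (hw.op_le_left _ _) (hw.op_le_left _ _))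
  have le_z : x ⋏ y ⋏ x ⋏ z ⋏ x ≼ z := hw.le_trans (hw.op_le_left _ _) (hw.op_le_right _ _)
  have le : x ⋏ y ⋏ x ⋏ z ⋏ x ≼ x ⋏ y ⋏ z ⋏ x :=
    hw.le_op (hw.le_op le_xy le_z) (hw.op_le_right _ _)
  calc x ⋏ y ⋏ x ⋏ z ⋏ x
      = x ⋏ y ⋏ x ⋏ z ⋏ x ⋏ (x ⋏ y ⋏ z ⋏ x) ⋏ (x ⋏ y ⋏ x ⋏ z ⋏ x) := le.symm
    _ = x ⋏ y ⋏ z ⋏ x := by rw [left_absorb, right_absorb]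

theorem cosetMap_cosetMap_of_le (h : IsSkewLattice wedge vee) (b : S) (hyx : y ≼ x) :
    cosetMap wedge (cosetMap wedge b x) y = cosetMap wedge b y := by
  have hw := h.isBand_wedge
  calc y ⋏ (x ⋏ b ⋏ x) ⋏ y = y ⋏ x ⋏ (b ⋏ x) ⋏ y := by simp only [hw.assoc]
    _ = y ⋏ x ⋏ y ⋏ (b ⋏ x) ⋏ y := (h.regular y x (b ⋏ x)).symm
    _ = y ⋏ b ⋏ x ⋏ y := by rw [hyx, ← hw.assoc]
    _ = y ⋏ b ⋏ y ⋏ x ⋏ y := (h.regular y b x).symm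
    _ = y ⋏ b ⋏ (y ⋏ x ⋏ y) := by simp only [hw.assoc]
    _ = y ⋏ b ⋏ y := by rw [hyx]

theorem cosetMap_wedge_cosetMap_vee (h : IsSkewLattice wedge vee) (a c : S) :
    cosetMap wedge c (cosetMap vee a c) = c := by
  calc (c ⋎ a ⋎ c) ⋏ c ⋏ (c ⋎ a ⋎ c) = c ⋏ (c ⋎ (a ⋎ c)) := by
        rw [h.wedge_vee_self_right, h.isBand_vee.assoc]
    _ = c := h.wedge_vee_self_left _ _

theorem leftInvOn_cosetMap (h : IsSkewLattice wedge vee) (hba : b ≼ a) :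
    Set.LeftInvOn (cosetMap wedge b) (cosetMap vee a) (dCoset wedge (dClass wedge a) b) := by
  rintro c ⟨x, hx, hc⟩
  have hca : c ≼ a := hc ▸ h.isBand_wedge.le_trans (h.isBand_wedge.cosetMap_le b x) hba
  have hya : cosetMap vee a c ≼ a := h.dual.vee_le_of_wedge_le <|
    h.isBand_vee.le_cosetMap (h.vee_le_of_wedge_le hca) (h.isBand_vee.le_refl a)
  calc cosetMap wedge b (cosetMap vee a c)
      = cosetMap wedge (cosetMap wedge b x) (cosetMap vee a c) :=
        (h.cosetMap_cosetMap_of_le b (h.isBand_wedge.le_trans hya hx.2)).symm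
    _ = c := by rw [← hc, h.cosetMap_wedge_cosetMap_vee]

theorem mapsTo_cosetMap_dCoset (h : IsSkewLattice wedge vee) (hba : b ≼ a) :
    Set.MapsTo (cosetMap wedge b) (dCoset vee (dClass vee b) a)
      (dCoset wedge (dClass wedge a) b) := fun x hx =>
  ⟨x, h.dClass_vee a ▸ h.isBand_vee.dCoset_subset_dClass (h.vee_le_of_wedge_le hba) hx, rfl⟩

theorem bijOn_cosetMap (h : IsSkewLattice wedge vee) (hba : b ≼ a) :
    Set.BijOn (cosetMap wedge b) (dCoset vee (dClass vee b) a)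
      (dCoset wedge (dClass wedge a) b) :=
  have hab := h.vee_le_of_wedge_le hba
  Set.InvOn.bijOn ⟨h.dual.leftInvOn_cosetMap hab, h.leftInvOn_cosetMap hba⟩
    (h.mapsTo_cosetMap_dCoset hba) (h.dual.mapsTo_cosetMap_dCoset hab)

end IsSkewLattice

/-- The coset bijection x ↦ x∧b∧x maps the coset B∨a∨B bijectively onto the coset
A∧b∧A. -/
theorem coset_bijection {S : Type*} (wedge vee : S → S → S)
    (wedge_idem : ∀ x : S, wedge x x = x)
    (vee_idem : ∀ x : S, vee x x = x)
    (wedge_assoc : ∀ x y z : S, wedge (wedge x y) z = wedge x (wedge y z))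
    (vee_assoc : ∀ x y z : S, vee (vee x y) z = vee x (vee y z))
    (abs₁ : ∀ x y : S, wedge x (vee x y) = x)
    (abs₂ : ∀ x y : S, wedge (vee y x) x = x)
    (abs₃ : ∀ x y : S, vee x (wedge x y) = x)
    (abs₄ : ∀ x y : S, vee (wedge y x) x = x)
    (a₀ b₀ : S) (hAB : wedge (wedge b₀ a₀) b₀ = b₀)
    (A : Set S) (hA : A = {x | wedge (wedge x a₀) x = x ∧ wedge (wedge a₀ x) a₀ = a₀})
    (B : Set S) (hB : B = {x | wedge (wedge x b₀) x = x ∧ wedge (wedge b₀ x) b₀ = b₀})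
    (a : S) (ha : a ∈ A) (b : S) (hb : b ∈ B) :
    Set.BijOn (fun x => wedge (wedge x b) x)
      {z | ∃ b' ∈ B, z = vee (vee b' a) b'}
      {z | ∃ a' ∈ A, z = wedge (wedge a' b) a'} := by
  have h : IsSkewLattice wedge vee :=
    ⟨⟨wedge_idem, wedge_assoc⟩, ⟨vee_idem, vee_assoc⟩, abs₁, abs₂, abs₃, abs₄⟩
  subst hA hB
  have hba : BandLE wedge b a :=
    h.isBand_wedge.le_trans hb.1 (h.isBand_wedge.le_trans hAB ha.2)
  have bij := h.bijOn_cosetMap hba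
  rwa [h.dClass_vee, h.isBand_wedge.dClass_eq ha, h.isBand_wedge.dClass_eq hb] at bij
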